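/- Unfolding of useful abstractions: if ufabs(p) then unf(p) is a value (an abstraction λx.t). -/

import Mathlib

/-! ## Terms of the pure λ-calculus (named syntax) -/

inductive Term : Type
  | var : ℕ → Term
  | lam : ℕ → Term → Term
  | app : Term → Term → Term
  deriving DecidableEq

namespace Term

/-- Size of a term: |x| = 1, |λx.t| = |t|+1, |t u| = |t|+|u|+1. -/
def size : Term → ℕ
  | var _ => 1
  | lam _ t => size t + 1
  | app t u => size t + size u + 1

/-- Free variables of a term. -/
def fv : Term → Finset ℕ
  | var x => {x}
  | lam x t => (fv t).erase x
  | app t u => fv t ∪ fv u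

/-- Meta-level substitution t{x←u}. -/
def subst (x : ℕ) (u : Term) : Term → Term
  | var y => if y = x then u else var y
  | lam y t => if y = x then lam y t else lam y (subst x u t)
  | app t s => app (subst x u t) (subst x u s)

def isVarB : Term → Bool
  | var _ => true
  | _ => false

/-- Values are abstractions (variables are not values). -/
def IsValue (t : Term) : Prop := ∃ x u, t = lam x u

/-- Needed variables of a term. -/
def nv : Term → Finset ℕ
  | var x => {x}
  | lam _ _ => ∅
  | app t u => nv t ∪ nv u

/-- Applied variables of a term. -/
def anv : Term → Finset ℕ
  | var _ => ∅
  | lam _ _ => ∅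
  | app (var x) u => insert x (anv u)
  | app (lam y t) u => anv (lam y t) ∪ anv u
  | app (app t s) u => anv (app t s) ∪ anv u

/-- Unapplied variables of a term. -/
def unv : Term → Finset ℕ
  | var x => {x}
  | lam _ _ => ∅
  | app (var _) u => unv u
  | app (lam y t) u => unv (lam y t) ∪ unv u
  | app (app t s) u => unv (app t s) ∪ unv u

end Term

/-! ## Inert terms and fireballs: i ::= x | i f,  f ::= v | i -/

mutual
  inductive Term.Inert : Term → Prop
    | var (x : ℕ) : Term.Inert (Term.var x)
    | app {i f : Term} : Term.Inert i → Term.Fireball f → Term.Inert (Term.app i f)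
  inductive Term.Fireball : Term → Prop
    | val {x : ℕ} {t : Term} : Term.Fireball (Term.lam x t)
    | inert {i : Term} : Term.Inert i → Term.Fireball i
end

/-- Non-variable inert terms i⁺. -/
def Term.InertPlus (t : Term) : Prop := t.Inert ∧ ∀ x, t ≠ Term.var x

/-! ## β-reduction (closure of the root rule under arbitrary term contexts) -/

inductive Beta : Term → Term → Prop
  | beta (x : ℕ) (t u : Term) : Beta (Term.app (Term.lam x t) u) (Term.subst x u t)
  | lam {t t' : Term} (x : ℕ) : Beta t t' → Beta (Term.lam x t) (Term.lam x t')
  | appL {t t' : Term} (u : Term) : Beta t t' → Beta (Term.app t u) (Term.app t' u)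
  | appR {u u' : Term} (t : Term) : Beta u u' → Beta (Term.app t u) (Term.app t u')

/-- `iterRel R n a b`: an n-step R-reduction sequence from a to b. -/
def iterRel {α : Type} (R : α → α → Prop) : ℕ → α → α → Prop
  | 0 => Eq
  | n + 1 => fun a c => ∃ b, R a b ∧ iterRel R n b c

/-! ## Environments and programs -/

/-- Environments are finite lists of explicit substitutions, written
left-to-right, i.e. E[x←t] is `E ++ [(x, t)]`. -/
abbrev Env := List (ℕ × Term)

def Env.dom (E : Env) : Finset ℕ := (E.map Prod.fst).toFinset

/-- Content of the leftmost explicit substitution on x. -/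
def Env.lookupES : Env → ℕ → Option Term
  | [], _ => none
  | (y, t) :: E, x => if y = x then some t else Env.lookupES E x

structure Program where
  tm : Term
  env : Env

/-- p@[x←u] : appending an explicit substitution at the end of the environment. -/
def Program.appES (p : Program) (x : ℕ) (u : Term) : Program := ⟨p.tm, p.env ++ [(x, u)]⟩

/-- One step of the needed-variables computation along an explicit substitution. -/
def nvStep (V : Finset ℕ) (e : ℕ × Term) : Finset ℕ :=
  if e.1 ∈ V then (V.erase e.1) ∪ Term.nv e.2 else V

/-- Needed variables of a program. -/
def Program.nv (p : Program) : Finset ℕ := p.env.foldl nvStep p.tm.nv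

/-- One step of the applied-variables computation (carrying needed variables). -/
def anvStep : Finset ℕ × Finset ℕ → ℕ × Term → Finset ℕ × Finset ℕ
  | (N, A), (x, u) =>
    (nvStep N (x, u),
      if x ∈ N then
        match u with
        | Term.var y => if x ∈ A then (A.erase x) ∪ {y} else A.erase x
        | _ => (A.erase x) ∪ Term.anv u
      else A)

/-- Applied variables of a program. -/
def Program.anv (p : Program) : Finset ℕ :=
  (p.env.foldl anvStep (p.tm.nv, p.tm.anv)).2

/-- One step of the unapplied-variables computation (carrying needed variables). -/
def unvStep : Finset ℕ × Finset ℕ → ℕ × Term → Finset ℕ × Finset ℕ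
  | (N, U), (x, u) =>
    (nvStep N (x, u),
      if x ∈ U ∨ (x ∈ N ∧ u.isVarB = false) then (U.erase x) ∪ Term.unv u else U)

/-- Unapplied variables of a program. -/
def Program.unv (p : Program) : Finset ℕ :=
  (p.env.foldl unvStep (p.tm.nv, p.tm.unv)).2

/-- Unfolding of a program into a term: unf(t, ε) = t, unf(t, E[x←u]) = unf(t, E){x←u}. -/
def Program.unf (p : Program) : Term :=
  p.env.foldl (fun s e => Term.subst e.1 e.2 s) p.tm

/-! ## Term contexts H ::= ⟨·⟩ | H t | i H (i inert, enforced by WF) -/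

inductive HCtx : Type
  | hole : HCtx
  | appL : HCtx → Term → HCtx
  | appR : Term → HCtx → HCtx

namespace HCtx

/-- Well-formedness: in i H, the left part i must be an inert term. -/
def WF : HCtx → Prop
  | hole => True
  | appL H _ => WF H
  | appR i H => Term.Inert i ∧ WF H

def plug : HCtx → Term → Term
  | hole, t => t
  | appL H u, t => Term.app (plug H t) u
  | appR i H, t => Term.app i (plug H t)

def nv : HCtx → Finset ℕ
  | hole => ∅
  | appL H _ => nv H
  | appR i H => Term.nv i ∪ nv H

def anv : HCtx → Finset ℕ
  | hole => ∅
  | appL H _ => anv H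
  | appR i H => Term.anv i ∪ anv H

def unv : HCtx → Finset ℕ
  | hole => ∅
  | appL H _ => unv H
  | appR i H => Term.unv i ∪ unv H

end HCtx

/-- Applicative term contexts H@ ::= ⟨·⟩ t | H@ t | i H@. -/
inductive HCtx.IsApp : HCtx → Prop
  | base (t : Term) : HCtx.IsApp (HCtx.appL HCtx.hole t)
  | appL {H : HCtx} (t : Term) : HCtx.IsApp H → HCtx.IsApp (HCtx.appL H t)
  | appR {H : HCtx} {i : Term} : Term.Inert i → HCtx.IsApp H → HCtx.IsApp (HCtx.appR i H)

/-! ## Program contexts: hole in the term part (tc) or inside an ES (ec) -/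

inductive PCtx : Type
  | tc : HCtx → Env → PCtx
  | ec : Term → Env → ℕ → HCtx → Env → PCtx

namespace PCtx

/-- P@[x←u] : appending an explicit substitution at the end of the environment of P. -/
def appES : PCtx → ℕ → Term → PCtx
  | tc H E, x, u => tc H (E ++ [(x, u)])
  | ec t E1 y H E2, x, u => ec t E1 y H (E2 ++ [(x, u)])

/-- Plugging a term into a program context. -/
def plugT : PCtx → Term → Program
  | tc H E, t => ⟨H.plug t, E⟩
  | ec u E1 x H E2, t => ⟨u, E1 ++ (x, H.plug t) :: E2⟩

/-- Plugging a program into a program context: the plugged environment is appended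
right after the position of the hole. -/
def plugP : PCtx → Program → Program
  | tc H E, q => ⟨H.plug q.tm, q.env ++ E⟩
  | ec u E1 x H E2, q => ⟨u, E1 ++ (x, H.plug q.tm) :: (q.env ++ E2)⟩

/-- Variables bound by the environment of P. -/
def dom : PCtx → Finset ℕ
  | tc _ E => Env.dom E
  | ec _ E1 y _ E2 => insert y (Env.dom E1 ∪ Env.dom E2)

/-- P(x): content of the leftmost explicit substitution on x occurring after the hole. -/
def lookup : PCtx → ℕ → Option Term
  | tc _ E, x => Env.lookupES E x
  | ec _ _ _ _ E2, x => Env.lookupES E2 x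

/-- (P⟨x⟩)@[x←H] : plug the variable x in the hole of P and append the ES [x←H],
whose content H now contains the hole. -/
def hered (P : PCtx) (x : ℕ) (H : HCtx) : PCtx :=
  ec (P.plugT (Term.var x)).tm (P.plugT (Term.var x)).env x H []

end PCtx

/-! ## Open CbNeed evaluation contexts P ∈ E_V -/

inductive OEC : PCtx → Finset ℕ → Prop
  | ax {H : HCtx} : H.WF → OEC (PCtx.tc H []) H.nv
  | gc {P : PCtx} {V : Finset ℕ} {x : ℕ} (t : Term) :
      OEC P V → x ∉ V → x ∉ P.dom → OEC (P.appES x t) V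
  | inert {P : PCtx} {V : Finset ℕ} {x : ℕ} {i : Term} :
      OEC P V → x ∈ V → Term.Inert i → x ∉ P.dom →
      OEC (P.appES x i) ((V.erase x) ∪ i.nv)
  | her {P : PCtx} {V : Finset ℕ} {x : ℕ} {H : HCtx} :
      OEC P V → x ∉ V → x ∉ P.dom → H.WF →
      OEC (P.hered x H) (V ∪ H.nv)

/-! ## Open CbNeed reduction -/

inductive StepOM : Program → Program → Prop
  | mk {P : PCtx} {V : Finset ℕ} {x : ℕ} {t u : Term} :
      OEC P V →
      StepOM (P.plugT (Term.app (Term.lam x t) u)) (P.plugP ⟨t, [(x, u)]⟩)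

inductive StepOE : Program → Program → Prop
  | mk {P : PCtx} {V : Finset ℕ} {x : ℕ} {v : Term} :
      OEC P V → P.lookup x = some v → v.IsValue →
      StepOE (P.plugT (Term.var x)) (P.plugT v)

def StepOnd (p q : Program) : Prop := StepOM p q ∨ StepOE p q

/-! ## Open CbNeed normal programs -/

inductive PInert : Program → Prop
  | ax {i : Term} : i.Inert → PInert ⟨i, []⟩
  | inert {p : Program} {x : ℕ} {i : Term} :
      PInert p → x ∈ p.nv → i.Inert → PInert (p.appES x i)
  | gc {p : Program} {x : ℕ} (t : Term) :
      PInert p → x ∉ p.nv → PInert (p.appES x t)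

inductive PAbs : Program → Prop
  | ax {v : Term} : v.IsValue → PAbs ⟨v, []⟩
  | gc {p : Program} {x : ℕ} (t : Term) : PAbs p → PAbs (p.appES x t)

def ONorm (p : Program) : Prop := PInert p ∨ PAbs p

/-! ## Useful Open CbNeed: multiplicative and exponential evaluation contexts -/

def upd (S : Finset ℕ) (x y : ℕ) : Finset ℕ := if x ∈ S then (S.erase x) ∪ {y} else S

inductive MEC : PCtx → Finset ℕ → Finset ℕ → Prop
  | ax {H : HCtx} : H.WF → MEC (PCtx.tc H []) H.unv H.anv
  | var {P : PCtx} {U A : Finset ℕ} {x y : ℕ} :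
      MEC P U A → x ∈ U ∪ A → x ∉ P.dom →
      MEC (P.appES x (Term.var y)) (upd U x y) (upd A x y)
  | gc {P : PCtx} {U A : Finset ℕ} {x : ℕ} (t : Term) :
      MEC P U A → x ∉ U ∪ A → x ∉ P.dom → MEC (P.appES x t) U A
  | inert {P : PCtx} {U A : Finset ℕ} {x : ℕ} {i : Term} :
      MEC P U A → x ∈ U ∪ A → i.InertPlus → x ∉ P.dom →
      MEC (P.appES x i) ((U.erase x) ∪ i.unv) ((A.erase x) ∪ i.anv)
  | val {P : PCtx} {U A : Finset ℕ} {x : ℕ} {v : Term} :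
      MEC P U A → x ∈ U → x ∉ A → v.IsValue → x ∉ P.dom →
      MEC (P.appES x v) (U.erase x) A
  | her {P : PCtx} {U A : Finset ℕ} {x : ℕ} {H : HCtx} :
      MEC P U A → x ∉ U ∪ A → x ∉ P.dom → H.WF →
      MEC (P.hered x H) (U ∪ H.unv) (A ∪ H.anv)

/-- Exponential evaluation contexts P ∈ E@_{U,A}; the last (natural number) index
counts the number of applications of rule (e_NA) in the derivation. -/
inductive EEC : PCtx → Finset ℕ → Finset ℕ → ℕ → Prop
  | ax1 {H : HCtx} : H.IsApp → EEC (PCtx.tc H []) H.unv H.anv 0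
  | ax2 {P : PCtx} {U A : Finset ℕ} {x : ℕ} {H : HCtx} :
      MEC P U A → x ∉ U ∪ A → x ∉ P.dom → H.IsApp →
      EEC (P.hered x H) ((U.erase x) ∪ H.unv) (A ∪ H.anv) 0
  | var {P : PCtx} {U A : Finset ℕ} {k : ℕ} {x y : ℕ} :
      EEC P U A k → x ∈ U ∪ A → x ∉ P.dom →
      EEC (P.appES x (Term.var y)) (upd U x y) (upd A x y) k
  | inert {P : PCtx} {U A : Finset ℕ} {k : ℕ} {x : ℕ} {i : Term} :
      EEC P U A k → x ∈ U ∪ A → i.InertPlus → x ∉ P.dom →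
      EEC (P.appES x i) ((U.erase x) ∪ i.unv) ((A.erase x) ∪ i.anv) k
  | gc {P : PCtx} {U A : Finset ℕ} {k : ℕ} {x : ℕ} (t : Term) :
      EEC P U A k → x ∉ U ∪ A → x ∉ P.dom → EEC (P.appES x t) U A k
  | val {P : PCtx} {U A : Finset ℕ} {k : ℕ} {x : ℕ} {v : Term} :
      EEC P U A k → x ∈ U → x ∉ A → v.IsValue → x ∉ P.dom →
      EEC (P.appES x v) (U.erase x) A k
  | na {P : PCtx} {U A : Finset ℕ} {k : ℕ} {x : ℕ} :
      EEC P U A k → x ∉ A → x ∉ P.dom →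
      EEC (P.hered x HCtx.hole) (U.erase x) A (k + 1)

/-! ## Useful Open CbNeed reduction -/

inductive StepUM : Program → Program → Prop
  | mk {P : PCtx} {U A : Finset ℕ} {x : ℕ} {t u : Term} :
      MEC P U A →
      StepUM (P.plugT (Term.app (Term.lam x t) u)) (P.plugP ⟨t, [(x, u)]⟩)

inductive StepUE : Program → Program → Prop
  | mk {P : PCtx} {U A : Finset ℕ} {k : ℕ} {x : ℕ} {v : Term} :
      EEC P U A k → P.lookup x = some v → v.IsValue →
      StepUE (P.plugT (Term.var x)) (P.plugT v)

def StepUnd (p q : Program) : Prop := StepUM p q ∨ StepUE p q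

/-- Useful multiplicative steps whose evaluation context lies in Em_{U,A}. -/
def StepUMat (U A : Finset ℕ) (p q : Program) : Prop :=
  ∃ (P : PCtx) (x : ℕ) (t u : Term), MEC P U A ∧
    p = P.plugT (Term.app (Term.lam x t) u) ∧ q = P.plugP ⟨t, [(x, u)]⟩

/-- Useful exponential steps whose evaluation context lies in E@_{U,A}. -/
def StepUEat (U A : Finset ℕ) (p q : Program) : Prop :=
  ∃ (P : PCtx) (k : ℕ) (x : ℕ) (v : Term), EEC P U A k ∧
    P.lookup x = some v ∧ v.IsValue ∧
    p = P.plugT (Term.var x) ∧ q = P.plugT v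

/-! ## Useful normal-form predicates -/

inductive GenVar : ℕ → Program → Prop
  | ax (x : ℕ) : GenVar x ⟨Term.var x, []⟩
  | her {x : ℕ} {p : Program} (y : ℕ) : GenVar x p → GenVar y (p.appES x (Term.var y))
  | gc {x z : ℕ} {p : Program} (t : Term) : GenVar x p → z ≠ x → GenVar x (p.appES z t)

inductive UfAbs : Program → Prop
  | ax {v : Term} : v.IsValue → UfAbs ⟨v, []⟩
  | gv {p : Program} {x : ℕ} {v : Term} : GenVar x p → v.IsValue → UfAbs (p.appES x v)
  | gc {p : Program} {x : ℕ} (t : Term) : UfAbs p → UfAbs (p.appES x t)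

inductive UfInert : Program → Prop
  | ax {i : Term} : i.InertPlus → UfInert ⟨i, []⟩
  | gv {p : Program} {x : ℕ} {i : Term} : GenVar x p → i.InertPlus → UfInert (p.appES x i)
  | inert {p : Program} {x : ℕ} {i : Term} :
      UfInert p → x ∈ p.nv → i.Inert → UfInert (p.appES x i)
  | useless {p : Program} {x : ℕ} {v : Term} :
      UfInert p → x ∈ p.unv → x ∉ p.anv → v.IsValue → UfInert (p.appES x v)
  | gc {p : Program} {x : ℕ} (t : Term) : UfInert p → x ∉ p.nv → UfInert (p.appES x t)

def UfNorm (p : Program) : Prop := UfInert p ∨ UfAbs p ∨ ∃ x, GenVar x p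

/-! ## The size-exploding family -/

/-- t₁ := λx.λy. y x x  (x := 0, y := 1). -/
def t1 : Term := Term.lam 0 (Term.lam 1 (Term.app (Term.app (Term.var 1) (Term.var 0)) (Term.var 0)))

/-- λy. y x x. -/
def tbody : Term := Term.lam 1 (Term.app (Term.app (Term.var 1) (Term.var 0)) (Term.var 0))

/-- The family t_n (values for n ≥ 1; tfam 0 is a dummy). -/
def tfam : ℕ → Term
  | 0 => t1
  | 1 => t1
  | n + 2 => Term.lam 0 (Term.app (tfam (n + 1)) tbody)

/-- I := λz.z. -/
def Idt : Term := Term.lam 2 (Term.var 2)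

/-- The family u_n : u₀ = I, u_{n+1} = λy. y u_n u_n. -/
def ufam : ℕ → Term
  | 0 => Idt
  | n + 1 => Term.lam 1 (Term.app (Term.app (Term.var 1) (ufam n)) (ufam n))

theorem Program.unf_appES (p : Program) (x : ℕ) (u : Term) :
    (p.appES x u).unf = Term.subst x u p.unf := by
  simp [Program.unf, Program.appES]

theorem GenVar.unf_eq {x : ℕ} {p : Program} (h : GenVar x p) : p.unf = Term.var x := by
  induction h with
  | ax x => rfl
  | her y _ ih => rw [Program.unf_appES, ih]; simp [Term.subst]
  | gc t _ hz ih => rw [Program.unf_appES, ih]; simp [Term.subst, hz.symm]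

theorem Term.IsValue.subst_val {t : Term} (h : t.IsValue) (x : ℕ) (u : Term) :
    (Term.subst x u t).IsValue := by
  obtain ⟨y, s, rfl⟩ := h
  unfold Term.subst
  split
  · exact ⟨_, _, rfl⟩
  · exact ⟨_, _, rfl⟩

/-- unfolding of useful abstractions. -/
theorem ufabs_unfolds_to_value :
    ∀ p : Program, UfAbs p → p.unf.IsValue := by
  intro p h
  induction h with
  | ax hv => exact hv
  | gv hg hv => rw [Program.unf_appES, hg.unf_eq]; simpa [Term.subst] using hv
  | gc t _ ih => rw [Program.unf_appES]; exact ih.subst_val _ _
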